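/- Let Ω ≠ 0 and ΔΩ, φ, τ be real numbers with τ > 0, let M ≥ 1 be a natural number, set T := Mτ, Ω' := Ω + ΔΩ, and φ' := φ − Ωτ/2 − ΔΩ·T/2. Then Σ_{m=1}^{M} ∫_{(m−1)τ}^{mτ} cos(Ω' m τ − Ω t + φ') dt = τ · (sin(Ωτ/2)/(Ωτ/2)) · Σ_{m=1}^{M} cos(ΔΩ(mτ − T/2) + φ). -/

import Mathlib

/-!
The mean of `cos (ω t + θ)` over an interval of length `τ` is its midpoint value damped by
`sinc (ω τ / 2)`. A step of the pulse ending at `x = m τ` has midpoint `x - τ / 2`, where the phase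
`Ω' x - Ω t` equals `ΔΩ x + Ω τ / 2`; the term `-Ω τ / 2` in the corrected phase cancels this
half-step advance, and `-ΔΩ T / 2` centres the remaining drift `ΔΩ x` on the middle of the pulse.
-/

theorem mul_sinc_self (x : ℝ) : x * Real.sinc x = Real.sin x := by
  obtain rfl | hx := eq_or_ne x 0
  · simp
  · rw [Real.sinc_of_ne_zero hx, mul_div_cancel₀ _ hx]

theorem integral_cos_mul_add_eq_sinc_mul_cos_midpoint (ω θ a b : ℝ) :
    ∫ t in a..b, Real.cos (ω * t + θ) =
      (b - a) * Real.sinc (ω * (b - a) / 2) * Real.cos (ω * ((a + b) / 2) + θ) := by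
  obtain rfl | hω := eq_or_ne ω 0
  · simp
  apply mul_left_cancel₀ hω
  calc ω * ∫ t in a..b, Real.cos (ω * t + θ)
      = Real.sin (ω * b + θ) - Real.sin (ω * a + θ) := by
        rw [intervalIntegral.mul_integral_comp_mul_add, integral_cos]
    _ = 2 * Real.sin (ω * (b - a) / 2) * Real.cos (ω * ((a + b) / 2) + θ) := by
        rw [Real.sin_sub_sin]
        ring_nf
    _ = 2 * (ω * (b - a) / 2 * Real.sinc (ω * (b - a) / 2)) *
          Real.cos (ω * ((a + b) / 2) + θ) := by
        rw [mul_sinc_self]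
    _ = ω * ((b - a) * Real.sinc (ω * (b - a) / 2) * Real.cos (ω * ((a + b) / 2) + θ)) := by
        ring

theorem integral_cos_step_eq_sinc_mul_cos (Ω Ω' τ x θ : ℝ) :
    ∫ t in (x - τ)..x, Real.cos (Ω' * x - Ω * t + (θ - Ω * τ / 2)) =
      τ * Real.sinc (Ω * τ / 2) * Real.cos ((Ω' - Ω) * x + θ) := by
  have hphase (t : ℝ) :
      Ω' * x - Ω * t + (θ - Ω * τ / 2) = -Ω * t + (Ω' * x + (θ - Ω * τ / 2)) := by ring
  have hmidphase :
      -Ω * ((x - τ + x) / 2) + (Ω' * x + (θ - Ω * τ / 2)) = (Ω' - Ω) * x + θ := by ring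
  simp only [hphase]
  rw [integral_cos_mul_add_eq_sinc_mul_cos_midpoint, hmidphase, sub_sub_cancel, neg_mul, neg_div,
    Real.sinc_neg]

theorem stmt_14 (Ω ΔΩ φ τ : ℝ) (hΩ : Ω ≠ 0) (hτ : 0 < τ) (M : ℕ) (hM : 1 ≤ M)
    (T Ω' φ' : ℝ) (hT : T = M * τ) (hΩ' : Ω' = Ω + ΔΩ)
    (hφ' : φ' = φ - Ω * τ / 2 - ΔΩ * T / 2) :
    (∑ m ∈ Finset.Icc 1 M,
        ∫ t in (((m : ℝ) - 1) * τ)..((m : ℝ) * τ), Real.cos (Ω' * m * τ - Ω * t + φ')) =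
      τ * (Real.sin (Ω * τ / 2) / (Ω * τ / 2)) *
        ∑ m ∈ Finset.Icc 1 M, Real.cos (ΔΩ * ((m : ℝ) * τ - T / 2) + φ) := by
  have hΩτ : Ω * τ / 2 ≠ 0 := by positivity
  rw [← Real.sinc_of_ne_zero hΩτ, Finset.mul_sum]
  refine Finset.sum_congr rfl fun m _ => ?_
  have hstep := integral_cos_step_eq_sinc_mul_cos Ω Ω' τ (m * τ) (φ - ΔΩ * T / 2)
  have hphase : φ - ΔΩ * T / 2 - Ω * τ / 2 = φ' := by rw [hφ']; ring
  have hdrift : (Ω' - Ω) * (m * τ) + (φ - ΔΩ * T / 2) = ΔΩ * (m * τ - T / 2) + φ := by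
    rw [hΩ']; ring
  rwa [hphase, hdrift, ← mul_assoc Ω', ← sub_one_mul] at hstep
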